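/- arXiv:2511.22688 — 3 statements merged into one kernel-verified Lean document; each statement's English description precedes it below -/
import Mathlib

section
/- Let d ≥ 1, let b : (0,1) × ℝ^d → ℝ^d be continuously differentiable, let ρ : (0,1) × ℝ^d → ℝ be twice continuously differentiable, strictly positive, and satisfy the continuity equation ∂_t ρ(t,x) + ∇·(b(t,·) ρ(t,·))(x) = 0 for all t, x. Let r : (0,1) × ℝ^d → ℝ be such that x ↦ r(t,x) is twice continuously differentiable and (t,x) ↦ r(t,x) is continuously differentiable, let F : (0,1) → ℝ be differentiable, let ε : (0,1) → ℝ be arbitrary, and define s(t,x) = ∇_x (log ρ(t,·))(x) and ρ̂(t,x) = ρ(t,x) · exp(r(t,x) + F(t)). Then for all t ∈ (0,1) and x ∈ ℝ^d: ∂_t ρ̂(t,x) + ∇·(b(t,·) ρ̂(t,·))(x) = ε(t) · ∇·( (−s(t,·) − ∇_x r(t,·)) ρ̂(t,·) + ∇_x ρ̂(t,·) )(x) + (⟪b(t,x), ∇_x r(t,x)⟫ + ∂_t r(t,x) + F'(t)) · ρ̂(t,x). -/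
open Set
open scoped RealInnerProductSpace

noncomputable section

/-- Divergence of a vector field: the trace of its Fréchet derivative. -/
def div' {d : ℕ} (v : EuclideanSpace ℝ (Fin d) → EuclideanSpace ℝ (Fin d))
    (x : EuclideanSpace ℝ (Fin d)) : ℝ :=
  LinearMap.trace ℝ (EuclideanSpace ℝ (Fin d)) (fderiv ℝ v x).toLinearMap

/-!
Write `ρhat = ρ exp φ` with `φ = r + F`. The operator `f ↦ ∂ₜf + ∇·(f b)` is a derivation up to the
zeroth-order term `f ∇·b`, so on `ρ exp φ` it is `exp φ` times its value at `ρ`, which the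
continuity equation annihilates, plus `(∂ₜφ + ⟪b, ∇φ⟫) ρ exp φ`. Since `F` is constant in space,
`∇ρhat = ρhat (∇ log ρ + ∇φ) = ρhat (s + ∇r)`, so the flux whose divergence multiplies `ε` vanishes
identically.
-/

open scoped Topology Gradient

section Gradient

theorem gradient_fun_add_const {𝕜 E : Type*} [RCLike 𝕜] [NormedAddCommGroup E]
    [InnerProductSpace 𝕜 E] [CompleteSpace E] (f : E → 𝕜) (c : 𝕜) (x : E) :
    ∇ (fun y => f y + c) x = ∇ f x := by
  simp only [gradient, fderiv_add_const]

variable {E : Type*} [NormedAddCommGroup E] [InnerProductSpace ℝ E] [CompleteSpace E]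
  {f φ : E → ℝ} {x : E}

theorem gradient_fun_log (hf : DifferentiableAt ℝ f x) (hx : f x ≠ 0) :
    ∇ (fun y => Real.log (f y)) x = (f x)⁻¹ • ∇ f x := by
  simp only [gradient, fderiv.log hf hx, map_smul]

theorem gradient_fun_mul_exp (hf : DifferentiableAt ℝ f x) (hφ : DifferentiableAt ℝ φ x) :
    ∇ (fun y => f y * Real.exp (φ y)) x = Real.exp (φ x) • (∇ f x + f x • ∇ φ x) := by
  simp only [gradient, fderiv_fun_mul hf hφ.exp, fderiv_exp hφ, map_add, map_smul]
  module

theorem gradient_fun_mul_exp_eq_smul_gradient_log_add (hf : DifferentiableAt ℝ f x)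
    (hx : f x ≠ 0) (hφ : DifferentiableAt ℝ φ x) :
    ∇ (fun y => f y * Real.exp (φ y)) x =
      (f x * Real.exp (φ x)) • (∇ (fun y => Real.log (f y)) x + ∇ φ x) := by
  rw [gradient_fun_mul_exp hf hφ, gradient_fun_log hf hx]
  match_scalars <;> field_simp

end Gradient

section Divergence

variable {E : Type*} [NormedAddCommGroup E]

/-- The divergence of a vector field on a normed space, as the trace of its Fréchet derivative.
It extends `div'` beyond coordinate spaces. `LinearMap.trace` is `0` on a space without a finite
basis, so the notion is meaningful in finite dimension only. -/
def divergence [NormedSpace ℝ E] (v : E → E) (x : E) : ℝ :=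
  LinearMap.trace ℝ E (fderiv ℝ v x).toLinearMap

theorem divergence_eq_zero_of_eventuallyEq_zero [NormedSpace ℝ E] {v : E → E} {x : E}
    (hv : v =ᶠ[𝓝 x] 0) : divergence v x = 0 := by
  simp [divergence, hv.fderiv_eq]

theorem divergence_fun_smul [NormedSpace ℝ E] [FiniteDimensional ℝ E] {f : E → ℝ} {v : E → E}
    {x : E} (hf : DifferentiableAt ℝ f x) (hv : DifferentiableAt ℝ v x) :
    divergence (fun y => f y • v y) x = f x * divergence v x + fderiv ℝ f x (v x) := by
  have trace_smulRight :
      LinearMap.trace ℝ E ((fderiv ℝ f x).smulRight (v x)).toLinearMap = fderiv ℝ f x (v x) :=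
    LinearMap.trace_smulRight _ _
  simp only [divergence, fderiv_fun_smul hf hv, ContinuousLinearMap.toLinearMap_add,
    ContinuousLinearMap.toLinearMap_smul, map_add, map_smul, smul_eq_mul, trace_smulRight]

variable [InnerProductSpace ℝ E] {f φ : E → ℝ} {x : E}

theorem divergence_fun_mul_exp_smul [FiniteDimensional ℝ E] {v : E → E}
    (hf : DifferentiableAt ℝ f x) (hφ : DifferentiableAt ℝ φ x) (hv : DifferentiableAt ℝ v x) :
    divergence (fun y => (f y * Real.exp (φ y)) • v y) x =
      Real.exp (φ x) * (divergence (fun y => f y • v y) x + f x * ⟪v x, ∇ φ x⟫) := by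
  have exp_smul_flux : (fun y => (f y * Real.exp (φ y)) • v y) =
      fun y => Real.exp (φ y) • (f y • v y) := by
    funext y
    module
  rw [exp_smul_flux, divergence_fun_smul hφ.exp (hf.fun_smul hv), fderiv_exp hφ,
    inner_gradient_right]
  simp only [smul_apply, map_smul, smul_eq_mul, conj_trivial]
  ring

theorem divergence_tilted_diffusion_flux_eq_zero [CompleteSpace E]
    (hf : ∀ᶠ y in 𝓝 x, DifferentiableAt ℝ f y) (hf_ne : f x ≠ 0)
    (hφ : ∀ᶠ y in 𝓝 x, DifferentiableAt ℝ φ y) :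
    divergence (fun y =>
      (f y * Real.exp (φ y)) • (-∇ (fun z => Real.log (f z)) y - ∇ φ y) +
        ∇ (fun z => f z * Real.exp (φ z)) y) x = 0 := by
  refine divergence_eq_zero_of_eventuallyEq_zero ?_
  filter_upwards [hf, hφ, hf.self_of_nhds.continuousAt.eventually_ne hf_ne] with y hfy hφy hfy_ne
  rw [gradient_fun_mul_exp_eq_smul_gradient_log_add hfy hfy_ne hφy, Pi.zero_apply]
  module

end Divergence

section Slices

variable {𝕜 E F G : Type*} [NontriviallyNormedField 𝕜] [NormedAddCommGroup E] [NormedSpace 𝕜 E]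
  [NormedAddCommGroup F] [NormedSpace 𝕜 F] [NormedAddCommGroup G] [NormedSpace 𝕜 G]
  {f : E → F → G} {x : E} {y : F}

theorem differentiableAt_curry_left
    (hf : DifferentiableAt 𝕜 (fun p : E × F => f p.1 p.2) (x, y)) :
    DifferentiableAt 𝕜 (fun z => f z y) x :=
  hf.comp x (f := fun z => (z, y)) (by fun_prop)

theorem differentiableAt_curry_right
    (hf : DifferentiableAt 𝕜 (fun p : E × F => f p.1 p.2) (x, y)) :
    DifferentiableAt 𝕜 (f x) y :=
  hf.comp y (f := fun z => (x, z)) (by fun_prop)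

end Slices

section Transport

variable {E : Type*} [NormedAddCommGroup E] [InnerProductSpace ℝ E] [FiniteDimensional ℝ E]

theorem deriv_fun_mul_exp {f φ : ℝ → ℝ} {t : ℝ} (hf : DifferentiableAt ℝ f t)
    (hφ : DifferentiableAt ℝ φ t) :
    deriv (fun τ => f τ * Real.exp (φ τ)) t = Real.exp (φ t) * (deriv f t + f t * deriv φ t) := by
  rw [deriv_fun_mul hf hφ.exp, deriv_exp hφ]
  ring

theorem deriv_add_divergence_fun_mul_exp {ρ φ : ℝ → E → ℝ} {v : E → E} {t : ℝ} {x : E}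
    (hρt : DifferentiableAt ℝ (fun τ => ρ τ x) t) (hρx : DifferentiableAt ℝ (ρ t) x)
    (hφt : DifferentiableAt ℝ (fun τ => φ τ x) t) (hφx : DifferentiableAt ℝ (φ t) x)
    (hv : DifferentiableAt ℝ v x) :
    deriv (fun τ => ρ τ x * Real.exp (φ τ x)) t +
        divergence (fun y => (ρ t y * Real.exp (φ t y)) • v y) x =
      Real.exp (φ t x) * (deriv (fun τ => ρ τ x) t + divergence (fun y => ρ t y • v y) x) +
        (⟪v x, ∇ (φ t) x⟫ + deriv (fun τ => φ τ x) t) * (ρ t x * Real.exp (φ t x)) := by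
  rw [deriv_fun_mul_exp hρt hφt, divergence_fun_mul_exp_smul hρx hφx hv]
  ring

theorem tilted_fokker_planck_with_diffusion_general {T : Set ℝ} {U : Set E}
    (hT : IsOpen T) (hU : IsOpen U) {b : ℝ → E → E} {ρ r : ℝ → E → ℝ} {F : ℝ → ℝ} (ε : ℝ → ℝ)
    {s : ℝ → E → E} {ρhat : ℝ → E → ℝ}
    (hb : DifferentiableOn ℝ (fun p : ℝ × E => b p.1 p.2) (T ×ˢ U))
    (hρ : DifferentiableOn ℝ (fun p : ℝ × E => ρ p.1 p.2) (T ×ˢ U))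
    (hρpos : ∀ t ∈ T, ∀ x ∈ U, 0 < ρ t x)
    (hce : ∀ t ∈ T, ∀ x ∈ U,
      deriv (fun τ => ρ τ x) t + divergence (fun y => ρ t y • b t y) x = 0)
    (hr : DifferentiableOn ℝ (fun p : ℝ × E => r p.1 p.2) (T ×ˢ U))
    (hF : DifferentiableOn ℝ F T)
    (hs : ∀ t x, s t x = ∇ (fun y => Real.log (ρ t y)) x)
    (hρhat : ∀ t x, ρhat t x = ρ t x * Real.exp (r t x + F t)) :
    ∀ t ∈ T, ∀ x ∈ U,
      deriv (fun τ => ρhat τ x) t + divergence (fun y => ρhat t y • b t y) x =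
        ε t * divergence (fun y => ρhat t y • (-(s t y) - ∇ (r t) y) + ∇ (ρhat t) y) x +
          (⟪b t x, ∇ (r t) x⟫ + deriv (fun τ => r τ x) t + deriv F t) * ρhat t x := by
  intro t ht x hx
  obtain rfl : ρhat = fun t x => ρ t x * Real.exp (r t x + F t) := funext₂ hρhat
  have mem_nhds {y : E} (hy : y ∈ U) : T ×ˢ U ∈ 𝓝 (t, y) := (hT.prod hU).mem_nhds ⟨ht, hy⟩
  have hρx {y} (hy : y ∈ U) := differentiableAt_curry_right (hρ.differentiableAt (mem_nhds hy))
  have hrx {y} (hy : y ∈ U) := differentiableAt_curry_right (hr.differentiableAt (mem_nhds hy))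
  have hρt := differentiableAt_curry_left (hρ.differentiableAt (mem_nhds hx))
  have hrt := differentiableAt_curry_left (hr.differentiableAt (mem_nhds hx))
  have hbx := differentiableAt_curry_right (hb.differentiableAt (mem_nhds hx))
  have hFt : DifferentiableAt ℝ F t := hF.differentiableAt (hT.mem_nhds ht)
  have diffusion := divergence_tilted_diffusion_flux_eq_zero (φ := fun y => r t y + F t)
    (Filter.eventually_of_mem (hU.mem_nhds hx) fun _ => hρx) (hρpos t ht x hx).ne'
    (Filter.eventually_of_mem (hU.mem_nhds hx) fun _ hy => (hrx hy).add_const (F t))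
  have transport := deriv_add_divergence_fun_mul_exp (φ := fun τ y => r τ y + F τ)
    hρt (hρx hx) (hrt.fun_add hFt) ((hrx hx).add_const (F t)) hbx
  simp only [gradient_fun_add_const] at diffusion transport
  simp only [hs, diffusion, transport, hce t ht x hx, deriv_fun_add hrt hFt]
  ring

end Transport

theorem tilted_fokker_planck_with_diffusion
    (d : ℕ) (hd : 1 ≤ d)
    (b : ℝ → EuclideanSpace ℝ (Fin d) → EuclideanSpace ℝ (Fin d))
    (ρ r : ℝ → EuclideanSpace ℝ (Fin d) → ℝ)
    (F ε : ℝ → ℝ)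
    (s : ℝ → EuclideanSpace ℝ (Fin d) → EuclideanSpace ℝ (Fin d))
    (ρhat : ℝ → EuclideanSpace ℝ (Fin d) → ℝ)
    (hb : ContDiffOn ℝ 1 (fun p : ℝ × EuclideanSpace ℝ (Fin d) => b p.1 p.2)
      (Ioo (0:ℝ) 1 ×ˢ univ))
    (hρ : ContDiffOn ℝ 2 (fun p : ℝ × EuclideanSpace ℝ (Fin d) => ρ p.1 p.2)
      (Ioo (0:ℝ) 1 ×ˢ univ))
    (hρpos : ∀ t ∈ Ioo (0:ℝ) 1, ∀ x, 0 < ρ t x)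
    (hce : ∀ t ∈ Ioo (0:ℝ) 1, ∀ x,
      deriv (fun τ => ρ τ x) t + div' (fun y => ρ t y • b t y) x = 0)
    (hrx : ∀ t ∈ Ioo (0:ℝ) 1, ContDiff ℝ 2 (r t))
    (hr : ContDiffOn ℝ 1 (fun p : ℝ × EuclideanSpace ℝ (Fin d) => r p.1 p.2)
      (Ioo (0:ℝ) 1 ×ˢ univ))
    (hF : DifferentiableOn ℝ F (Ioo (0:ℝ) 1))
    (hs : ∀ t x, s t x = gradient (fun y => Real.log (ρ t y)) x)
    (hρhat : ∀ t x, ρhat t x = ρ t x * Real.exp (r t x + F t)) :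
    ∀ t ∈ Ioo (0:ℝ) 1, ∀ x,
      deriv (fun τ => ρhat τ x) t + div' (fun y => ρhat t y • b t y) x =
        ε t * div' (fun y =>
            ρhat t y • (-(s t y) - gradient (r t) y) + gradient (ρhat t) y) x
        + (⟪b t x, gradient (r t) x⟫ + deriv (fun τ => r τ x) t + deriv F t) * ρhat t x := by
  intro t ht x
  exact tilted_fokker_planck_with_diffusion_general isOpen_Ioo isOpen_univ ε
    (hb.differentiableOn one_ne_zero) (hρ.differentiableOn two_ne_zero)
    (fun t ht x _ => hρpos t ht x) (fun t ht x _ => hce t ht x) (hr.differentiableOn one_ne_zero)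
    hF hs hρhat t ht x (mem_univ x)
end
end

section
/- Let d ≥ 1, let I ⊆ ℝ be an open interval, let b : I × ℝ^d → ℝ^d be continuous, and let X : I × I × ℝ^d → ℝ^d be continuously differentiable in all arguments and satisfy: (i) X(t,t,x) = x for all t ∈ I, x ∈ ℝ^d; (ii) the flow property X(s,u,X(t,s,x)) = X(t,u,x) for all t,s,u ∈ I and x ∈ ℝ^d; (iii) the tangent condition ∂_s X(t,s,x) = b(s, X(t,s,x)) for all t,s ∈ I, x ∈ ℝ^d, where ∂_s denotes the derivative in the second time argument. Then X satisfies the Eulerian equation: for all s,u ∈ I and x ∈ ℝ^d, ∂_s X(s,u,x) + (D_x X(s,u,·))(x) (b(s,x)) = 0, where ∂_s now denotes the derivative in the first time argument and D_x X(s,u,·)(x) is the Fréchet derivative of the map y ↦ X(s,u,y) at x. -/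
open Set

noncomputable section

/-!
By the flow property, `σ ↦ X σ u (X s σ x)` is constantly equal to `X s u x`. Differentiating it
at `σ = s`, where the inner trajectory passes through `x` with velocity `b s x`, the chain rule
gives the left-hand side of the Eulerian equation.
-/

open Filter Function Topology

lemma differentiableOn_middle_slice {𝕜 A B C F : Type*} [NontriviallyNormedField 𝕜]
    [NormedAddCommGroup A] [NormedSpace 𝕜 A] [NormedAddCommGroup B] [NormedSpace 𝕜 B]
    [NormedAddCommGroup C] [NormedSpace 𝕜 C] [NormedAddCommGroup F] [NormedSpace 𝕜 F]
    {f : A × B × C → F} {S : Set A} {T : Set B} {U : Set C}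
    (hf : DifferentiableOn 𝕜 f (S ×ˢ T ×ˢ U)) {b : B} (hb : b ∈ T) :
    DifferentiableOn 𝕜 (fun p : A × C => f (p.1, b, p.2)) (S ×ˢ U) :=
  hf.comp (f := fun p : A × C => (p.1, b, p.2)) (by fun_prop) fun _ hp => ⟨hp.1, hb, hp.2⟩

section CurveDerivative

variable {𝕜 E F : Type*} [NontriviallyNormedField 𝕜] [NormedAddCommGroup E] [NormedSpace 𝕜 E]
  [NormedAddCommGroup F] [NormedSpace 𝕜 F] {f : 𝕜 → E → F} {s : 𝕜}

lemma hasDerivAt_left_of_hasFDerivAt_uncurry {x : E} {L : 𝕜 × E →L[𝕜] F}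
    (hf : HasFDerivAt (uncurry f) L (s, x)) : HasDerivAt (fun σ => f σ x) (L (1, 0)) s :=
  hf.comp_hasDerivAt (f := fun σ => (σ, x)) s ((hasDerivAt_id s).prodMk (hasDerivAt_const s x))

lemma hasFDerivAt_right_of_hasFDerivAt_uncurry {x : E} {L : 𝕜 × E →L[𝕜] F}
    (hf : HasFDerivAt (uncurry f) L (s, x)) :
    HasFDerivAt (f s) (L.comp (ContinuousLinearMap.inr 𝕜 𝕜 E)) x :=
  hf.comp (f := fun y => (s, y)) x (hasFDerivAt_prodMk_right s x)

lemma hasDerivAt_along_curve {γ : 𝕜 → E} {v : E}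
    (hf : DifferentiableAt 𝕜 (uncurry f) (s, γ s)) (hγ : HasDerivAt γ v s) :
    HasDerivAt (fun σ => f σ (γ σ))
      (deriv (fun σ => f σ (γ s)) s + fderiv 𝕜 (f s) (γ s) v) s := by
  set L := fderiv 𝕜 (uncurry f) (s, γ s)
  have hL : HasFDerivAt (uncurry f) L (s, γ s) := hf.hasFDerivAt
  have h_split : deriv (fun σ => f σ (γ s)) s + fderiv 𝕜 (f s) (γ s) v = L (1, v) := by
    rw [(hasDerivAt_left_of_hasFDerivAt_uncurry hL).deriv,
      (hasFDerivAt_right_of_hasFDerivAt_uncurry hL).fderiv, ContinuousLinearMap.comp_apply,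
      ContinuousLinearMap.inr_apply, ← map_add, Prod.mk_add_mk, add_zero, zero_add]
  rw [h_split]
  exact hL.comp_hasDerivAt (f := fun σ => (σ, γ σ)) s ((hasDerivAt_id s).prodMk hγ)

lemma deriv_add_fderiv_eq_zero_of_eventually_const_along_curve {γ : 𝕜 → E} {v : E} {c : F}
    (hf : DifferentiableAt 𝕜 (uncurry f) (s, γ s)) (hγ : HasDerivAt γ v s)
    (hconst : ∀ᶠ σ in 𝓝 s, f σ (γ σ) = c) :
    deriv (fun σ => f σ (γ s)) s + fderiv 𝕜 (f s) (γ s) v = 0 :=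
  (hasDerivAt_along_curve hf hγ).unique ((hasDerivAt_const s c).congr_of_eventuallyEq hconst)

end CurveDerivative

theorem flow_map_eulerian_equation_general {𝕜 E : Type*} [NontriviallyNormedField 𝕜]
    [NormedAddCommGroup E] [NormedSpace 𝕜 E] {I : Set 𝕜} (hI : IsOpen I)
    {b : 𝕜 → E → E} {X : 𝕜 → 𝕜 → E → E}
    (hX : ∀ u ∈ I, DifferentiableOn 𝕜 (fun p : 𝕜 × E => X p.1 u p.2) (I ×ˢ univ))
    (hid : ∀ t ∈ I, ∀ x, X t t x = x)
    (hflow : ∀ t ∈ I, ∀ s ∈ I, ∀ u ∈ I, ∀ x, X s u (X t s x) = X t u x)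
    (htangent : ∀ t ∈ I, ∀ x, HasDerivAt (fun σ => X t σ x) (b t x) t)
    {s u : 𝕜} (hs : s ∈ I) (hu : u ∈ I) (x : E) :
    deriv (fun σ => X σ u x) s + fderiv 𝕜 (X s u) x (b s x) = 0 := by
  have hdiff : DifferentiableAt 𝕜 (uncurry fun σ => X σ u) (s, X s s x) :=
    (hX u hu).differentiableAt ((hI.prod isOpen_univ).mem_nhds ⟨hs, mem_univ _⟩)
  have hconst : ∀ᶠ σ in 𝓝 s, X σ u (X s σ x) = X s u x :=
    (hI.eventually_mem hs).mono fun σ hσ => hflow s hs σ hσ u hu x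
  simpa only [hid s hs x] using
    deriv_add_fderiv_eq_zero_of_eventually_const_along_curve hdiff (htangent s hs x) hconst

theorem flow_map_eulerian_equation
    (d : ℕ) (hd : 1 ≤ d)
    (I : Set ℝ) (hIopen : IsOpen I) (hIconn : I.OrdConnected)
    (b : ℝ → EuclideanSpace ℝ (Fin d) → EuclideanSpace ℝ (Fin d))
    (X : ℝ → ℝ → EuclideanSpace ℝ (Fin d) → EuclideanSpace ℝ (Fin d))
    (hb : ContinuousOn (fun p : ℝ × EuclideanSpace ℝ (Fin d) => b p.1 p.2) (I ×ˢ univ))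
    (hX : ContDiffOn ℝ 1
      (fun p : ℝ × ℝ × EuclideanSpace ℝ (Fin d) => X p.1 p.2.1 p.2.2)
      (I ×ˢ I ×ˢ univ))
    (hid : ∀ t ∈ I, ∀ x, X t t x = x)
    (hflow : ∀ t ∈ I, ∀ s ∈ I, ∀ u ∈ I, ∀ x, X s u (X t s x) = X t u x)
    (htangent : ∀ t ∈ I, ∀ s ∈ I, ∀ x,
      HasDerivAt (fun σ => X t σ x) (b s (X t s x)) s) :
    ∀ s ∈ I, ∀ u ∈ I, ∀ x,
      deriv (fun σ => X σ u x) s + fderiv ℝ (fun y => X s u y) x (b s x) = 0 :=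
  fun _ hs _ hu x => flow_map_eulerian_equation_general hIopen
    (fun _ hu => differentiableOn_middle_slice (hX.differentiableOn one_ne_zero) hu) hid hflow
    (fun t ht x => by simpa only [hid t ht x] using htangent t ht t ht x) hs hu x
end
end

section
/- Let d ≥ 1, let I ⊆ ℝ be an open interval, let b : I × ℝ^d → ℝ^d be continuous, let X : I × ℝ^d → ℝ^d be continuously differentiable and satisfy the Eulerian equation ∂_t X(t,x) + (D_x X(t,·))(x)(b(t,x)) = 0 for all t ∈ I and x ∈ ℝ^d, let r : ℝ^d → ℝ be continuously differentiable, and let x : I → ℝ^d be differentiable with x'(t) = b(t, x(t)) for all t ∈ I. Then: (i) the function t ↦ r(X(t, x(t))) is constant on I; and (ii) for all t ∈ I, the derivative of t ↦ t · r(X(t, x(t))) equals r(X(t, x(t))). -/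
open Set

noncomputable section

/-!
By the chain rule, the velocity of `τ ↦ X τ (x τ)` at time `t` is `∂ₜX + ∇X ẋ` evaluated at
`(t, x t)`, which is the left-hand side of the Eulerian equation once `ẋ t = b t (x t)`.
Hence the look-ahead point itself, and not only its reward, is conserved along the trajectory.
On `I` the product `τ • r (X τ (x τ))` is therefore `τ` times a constant.
-/

section Curve

variable {𝕜 E F : Type*} [NontriviallyNormedField 𝕜]
  [NormedAddCommGroup E] [NormedSpace 𝕜 E] [NormedAddCommGroup F] [NormedSpace 𝕜 F]

theorem hasDerivAt_apply_curve {X : 𝕜 → E → F} {x : 𝕜 → E} {v : E} {t : 𝕜}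
    (hX : DifferentiableAt 𝕜 (fun p : 𝕜 × E => X p.1 p.2) (t, x t)) (hx : HasDerivAt x v t) :
    HasDerivAt (fun τ => X τ (x τ))
      (deriv (fun τ => X τ (x t)) t + fderiv 𝕜 (X t) (x t) v) t := by
  set L := fderiv 𝕜 (fun p : 𝕜 × E => X p.1 p.2) (t, x t)
  have total : HasFDerivAt (fun p : 𝕜 × E => X p.1 p.2) L (t, x t) := hX.hasFDerivAt
  have time_partial : HasDerivAt (fun τ => X τ (x t)) (L (1, 0)) t :=
    total.comp_hasDerivAt (f := fun τ => (τ, x t)) t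
      ((hasDerivAt_id t).prodMk (hasDerivAt_const t (x t)))
  have space_partial : HasFDerivAt (X t) (L.comp (.inr 𝕜 𝕜 E)) (x t) :=
    total.comp (f := fun y => (t, y)) (x t) (hasFDerivAt_prodMk_right t (x t))
  have along_curve : HasDerivAt (fun τ => X τ (x τ)) (L (1, v)) t :=
    total.comp_hasDerivAt (f := fun τ => (τ, x τ)) t ((hasDerivAt_id t).prodMk hx)
  have split : L (1, v) = L (1, 0) + L (0, v) := by
    rw [← map_add, Prod.mk_add_mk, add_zero, zero_add]
  rw [time_partial.deriv, space_partial.fderiv]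
  exact split ▸ along_curve

theorem hasDerivAt_id_smul_of_eventually_eq {f : 𝕜 → F} {t : 𝕜}
    (hf : ∀ᶠ s in nhds t, f s = f t) : HasDerivAt (fun τ => τ • f τ) (f t) t := by
  have linear : HasDerivAt (fun τ : 𝕜 => τ • f t) (f t) t := by
    simpa only [id_eq, one_smul] using (hasDerivAt_id t).smul_const (f t)
  exact linear.congr_of_eventuallyEq (hf.mono fun s hs => congrArg (s • ·) hs)

end Curve

section Trajectory

variable {𝕜 E F G : Type*} [RCLike 𝕜]
  [NormedAddCommGroup E] [NormedSpace 𝕜 E] [NormedAddCommGroup F] [NormedSpace 𝕜 F]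
  [NormedAddCommGroup G] [NormedSpace 𝕜 G]
  {I : Set 𝕜} {b : 𝕜 → E → E} {X : 𝕜 → E → F} {x : 𝕜 → E}

theorem eq_along_trajectory_of_eulerian (hIopen : IsOpen I) (hIconn : IsPreconnected I)
    (hX : ∀ t ∈ I, DifferentiableAt 𝕜 (fun p : 𝕜 × E => X p.1 p.2) (t, x t))
    (heuler : ∀ t ∈ I, deriv (fun τ => X τ (x t)) t + fderiv 𝕜 (X t) (x t) (b t (x t)) = 0)
    (hx : ∀ t ∈ I, HasDerivAt x (b t (x t)) t) {t t' : 𝕜} (ht : t ∈ I) (ht' : t' ∈ I) :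
    X t (x t) = X t' (x t') := by
  have stationary : ∀ s ∈ I, HasDerivAt (fun τ => X τ (x τ)) 0 s := fun s hs =>
    heuler s hs ▸ hasDerivAt_apply_curve (hX s hs) (hx s hs)
  exact hIopen.is_const_of_deriv_eq_zero hIconn (f := fun τ => X τ (x τ))
    (fun s hs => (stationary s hs).differentiableAt.differentiableWithinAt)
    (fun s hs => (stationary s hs).deriv) ht ht'

theorem flow_map_lookahead_weight_rate_general (hIopen : IsOpen I) (hIconn : IsPreconnected I)
    (hX : ∀ t ∈ I, DifferentiableAt 𝕜 (fun p : 𝕜 × E => X p.1 p.2) (t, x t))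
    (heuler : ∀ t ∈ I, deriv (fun τ => X τ (x t)) t + fderiv 𝕜 (X t) (x t) (b t (x t)) = 0)
    (hx : ∀ t ∈ I, HasDerivAt x (b t (x t)) t) (r : F → G) :
    (∀ t ∈ I, ∀ t' ∈ I, r (X t (x t)) = r (X t' (x t'))) ∧
    (∀ t ∈ I, HasDerivAt (fun τ => τ • r (X τ (x τ))) (r (X t (x t))) t) := by
  have conserved : ∀ t ∈ I, ∀ t' ∈ I, r (X t (x t)) = r (X t' (x t')) := fun t ht t' ht' =>
    congrArg r (eq_along_trajectory_of_eulerian hIopen hIconn hX heuler hx ht ht')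
  refine ⟨conserved, fun t ht => ?_⟩
  have locally_constant : ∀ᶠ s in nhds t, r (X s (x s)) = r (X t (x t)) := by
    filter_upwards [hIopen.mem_nhds ht] with s hs using conserved s hs t ht
  exact hasDerivAt_id_smul_of_eventually_eq (f := fun τ => r (X τ (x τ))) locally_constant

end Trajectory

theorem flow_map_lookahead_weight_rate
    (d : ℕ) (hd : 1 ≤ d)
    (I : Set ℝ) (hIopen : IsOpen I) (hIconn : I.OrdConnected)
    (b : ℝ → EuclideanSpace ℝ (Fin d) → EuclideanSpace ℝ (Fin d))
    (X : ℝ → EuclideanSpace ℝ (Fin d) → EuclideanSpace ℝ (Fin d))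
    (r : EuclideanSpace ℝ (Fin d) → ℝ)
    (x : ℝ → EuclideanSpace ℝ (Fin d))
    (hb : ContinuousOn (fun p : ℝ × EuclideanSpace ℝ (Fin d) => b p.1 p.2) (I ×ˢ univ))
    (hX : ContDiffOn ℝ 1
      (fun p : ℝ × EuclideanSpace ℝ (Fin d) => X p.1 p.2) (I ×ˢ univ))
    (heuler : ∀ t ∈ I, ∀ y,
      deriv (fun τ => X τ y) t + fderiv ℝ (X t) y (b t y) = 0)
    (hr : ContDiff ℝ 1 r)
    (hx : ∀ t ∈ I, HasDerivAt x (b t (x t)) t) :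
    (∀ t ∈ I, ∀ t' ∈ I, r (X t (x t)) = r (X t' (x t'))) ∧
    (∀ t ∈ I, HasDerivAt (fun τ => τ * r (X τ (x τ))) (r (X t (x t))) t) :=
  flow_map_lookahead_weight_rate_general hIopen hIconn.isPreconnected
    (fun t ht => (hX.differentiableOn one_ne_zero).differentiableAt
      ((hIopen.prod isOpen_univ).mem_nhds ⟨ht, mem_univ (x t)⟩))
    (fun t ht => heuler t ht (x t)) hx r
end
end
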